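/- arXiv:math/0703140 — 2 statements merged into one kernel-verified Lean document; each statement's English description precedes it below -/
import Mathlib

section
/- Fix β > 0 and a, b > 0, and for each k ≥ 0 let α_k be B(kβ/4 + a, kβ/4 + b)-distributed if k is even and B((k−1)β/4 + a + b, (k+1)β/4)-distributed if k is odd. Then there is a constant C depending only on β, a, b such that for every k ≥ 0 and every ψ ∈ ℝ, E{Υ̃(ψ, α_k)⁴} ≤ C (k+1)^{−2}, where Υ̃(ψ, α) = 2[α − E(α)] sin ψ. -/
open MeasureTheory ProbabilityTheory Filter
open scoped Real NNReal

/-- `Υ(ψ, α) = −2 Im log(1 − α e^{iψ})` (principal branch of the logarithm). -/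
noncomputable def Ups (ψ : ℝ) (z : ℂ) : ℝ :=
  -2 * (Complex.log (1 - z * Complex.exp (ψ * Complex.I))).im

/-- The `B(s,t)` distribution on `ℝ`: supported on `(−1,1)` with density
`2^{1−s−t} Γ(s+t)/(Γ(s)Γ(t)) (1−x)^{s−1}(1+x)^{t−1}` w.r.t. Lebesgue measure. -/
noncomputable def betaDist (s t : ℝ) : Measure ℝ :=
  (volume : Measure ℝ).withDensity fun x =>
    ENNReal.ofReal (if x ∈ Set.Ioo (-1 : ℝ) 1 then
      2 ^ (1 - s - t) * Real.Gamma (s + t) / (Real.Gamma s * Real.Gamma t) *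
        (1 - x) ^ (s - 1) * (1 + x) ^ (t - 1) else 0)

/-- The distribution of the Verblunsky coefficient `α_k` in the Jacobi β-ensemble model:
`B(kβ/4 + a, kβ/4 + b)` for `k` even and `B((k−1)β/4 + a + b, (k+1)β/4)` for `k` odd. -/
noncomputable def jacobiAlphaDist (β a b : ℝ) (k : ℕ) : Measure ℝ :=
  if Even k then betaDist ((k : ℝ) * β / 4 + a) ((k : ℝ) * β / 4 + b)
  else betaDist (((k : ℝ) - 1) * β / 4 + a + b) (((k : ℝ) + 1) * β / 4)

/-!
Under `x ↦ 1 - 2 x` the law `B(s,t)` is the image of the classical beta distribution on `(0, 1)`.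
Multiplying the density of the latter by `x` amounts, up to the factor `s / (s + t)`, to raising `s`
by one, which yields all its moments as rational functions of `s` and `t`. Once
`s t ≤ (s + t)² / 4` is used, the fourth central moment is bounded by a rational function of `s + t`
of degree `-2`; for `α_k` the sum `s + t = kβ/2 + a + b` grows linearly in `k`.
-/

section CentralMoment

variable {Ω : Type*} [MeasurableSpace Ω] {μ : Measure Ω} {X : Ω → ℝ}

lemma centralMoment_id_map (hX : AEMeasurable X μ) (n : ℕ) :
    centralMoment id n (μ.map X) = centralMoment X n μ := by
  simp only [centralMoment, Pi.pow_apply, Pi.sub_apply, id_eq]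
  rw [integral_map hX (by fun_prop), integral_map hX (by fun_prop)]

lemma centralMoment_const_add_const_mul [IsProbabilityMeasure μ] (hX : Integrable X μ)
    (c d : ℝ) (n : ℕ) :
    centralMoment (fun ω ↦ c + d * X ω) n μ = d ^ n * centralMoment X n μ := by
  have mean_eq : ∫ ω, c + d * X ω ∂μ = c + d * ∫ ω, X ω ∂μ := by
    rw [integral_add (integrable_const c) (hX.const_mul d), integral_const_mul]
    simp
  simp only [centralMoment, Pi.pow_apply, Pi.sub_apply, mean_eq, add_sub_add_left_eq_sub,
    ← mul_sub, mul_pow, integral_const_mul]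

lemma centralMoment_eq_sum_moment {n : ℕ} (hX : ∀ k ≤ n, Integrable (X ^ k) μ) :
    centralMoment X n μ =
      ∑ k ∈ Finset.range (n + 1), moment X k μ * (-∫ ω, X ω ∂μ) ^ (n - k) * n.choose k := by
  simp only [centralMoment, moment, Pi.pow_apply, Pi.sub_apply]
  simp only [sub_eq_add_neg, add_pow]
  rw [integral_finsetSum]
  · simp only [integral_mul_const]
  · intro k hk
    exact ((hX k (Finset.mem_range_succ_iff.mp hk)).mul_const _).mul_const _

end CentralMoment

section BetaMeasure

variable {s t : ℝ}

lemma beta_add_one_left (hs : s ≠ 0) (hst : s + t ≠ 0) :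
    beta (s + 1) t = s / (s + t) * beta s t := by
  rw [beta, beta, add_right_comm, Real.Gamma_add_one hs, Real.Gamma_add_one hst]
  field_simp

lemma mul_betaPDFReal (hs : s ≠ 0) (hst : s + t ≠ 0) (x : ℝ) :
    x * betaPDFReal s t x = s / (s + t) * betaPDFReal (s + 1) t x := by
  unfold betaPDFReal
  split_ifs with hx
  · rw [beta_add_one_left hs hst, add_sub_right_comm, Real.rpow_add_one hx.1.ne']
    field_simp
  · simp only [mul_zero]

lemma betaPDFReal_nonneg (hs : 0 < s) (ht : 0 < t) (x : ℝ) : 0 ≤ betaPDFReal s t x := by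
  by_cases hx : 0 < x ∧ x < 1
  · exact (betaPDFReal_pos hx.1 hx.2 hs ht).le
  · rw [betaPDFReal, if_neg hx]

lemma measurable_betaPDF (s t : ℝ) : Measurable (betaPDF s t) :=
  (measurable_betaPDFReal s t).ennreal_ofReal

lemma integral_betaMeasure (hs : 0 < s) (ht : 0 < t) (f : ℝ → ℝ) :
    ∫ x, f x ∂betaMeasure s t = ∫ x, betaPDFReal s t x * f x := by
  rw [betaMeasure, integral_withDensity_eq_integral_toReal_smul (measurable_betaPDF s t)
    (ae_of_all _ fun _ ↦ ENNReal.ofReal_lt_top)]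
  simp only [betaPDF, ENNReal.toReal_ofReal (betaPDFReal_nonneg hs ht _), smul_eq_mul]

lemma integral_mul_betaMeasure (hs : 0 < s) (ht : 0 < t) (f : ℝ → ℝ) :
    ∫ x, x * f x ∂betaMeasure s t = s / (s + t) * ∫ x, f x ∂betaMeasure (s + 1) t := by
  rw [integral_betaMeasure hs ht, integral_betaMeasure (by positivity) ht, ← integral_const_mul]
  congr with x
  linear_combination f x * mul_betaPDFReal hs.ne' (add_pos hs ht).ne' x

lemma moment_id_betaMeasure (hs : 0 < s) (ht : 0 < t) (n : ℕ) :
    moment id n (betaMeasure s t) = ∏ i ∈ Finset.range n, (s + i) / (s + t + i) := by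
  induction n generalizing s with
  | zero =>
    have := isProbabilityMeasureBeta hs ht
    simp [moment]
  | succ n ih =>
    have size_bias : moment id (n + 1) (betaMeasure s t) =
        s / (s + t) * moment id n (betaMeasure (s + 1) t) := by
      simpa only [moment, Pi.pow_apply, id_eq, pow_succ'] using
        integral_mul_betaMeasure hs ht (· ^ n)
    rw [size_bias, ih (by positivity), Finset.prod_range_succ', mul_comm]
    simp only [Nat.cast_add, Nat.cast_one, Nat.cast_zero, add_zero, add_assoc, add_comm,
      add_left_comm]

lemma ae_mem_Ioo_betaMeasure (s t : ℝ) : ∀ᵐ x ∂betaMeasure s t, x ∈ Set.Ioo (0 : ℝ) 1 := by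
  rw [betaMeasure, ae_withDensity_iff (measurable_betaPDF s t)]
  refine ae_of_all _ fun x hx ↦ ⟨?_, ?_⟩
  · exact lt_of_not_ge fun h ↦ hx (betaPDF_eq_zero_of_nonpos h)
  · exact lt_of_not_ge fun h ↦ hx (betaPDF_eq_zero_of_one_le h)

lemma integrable_pow_betaMeasure (hs : 0 < s) (ht : 0 < t) (n : ℕ) :
    Integrable (id ^ n) (betaMeasure s t) := by
  have := isProbabilityMeasureBeta hs ht
  refine Integrable.of_bound (by fun_prop) 1 ?_
  filter_upwards [ae_mem_Ioo_betaMeasure s t] with x hx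
  rw [Pi.pow_apply, id_eq, norm_pow, Real.norm_of_nonneg hx.1.le]
  exact pow_le_one₀ hx.1.le hx.2.le

lemma centralMoment_four_betaMeasure (hs : 0 < s) (ht : 0 < t) :
    centralMoment id 4 (betaMeasure s t) =
      3 * (s * t) * (2 * (s + t) ^ 2 + s * t * (s + t - 6)) /
        ((s + t) ^ 4 * (s + t + 1) * (s + t + 2) * (s + t + 3)) := by
  have mean_eq : ∫ x, id x ∂betaMeasure s t = s / (s + t) := by
    simpa [moment] using moment_id_betaMeasure hs ht 1
  rw [centralMoment_eq_sum_moment fun k _ ↦ integrable_pow_betaMeasure hs ht k, mean_eq]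
  simp only [moment_id_betaMeasure hs ht, Finset.sum_range_succ, Finset.prod_range_succ,
    Finset.range_zero, Finset.sum_empty, Finset.prod_empty]
  push_cast [Nat.choose]
  field_simp
  ring

lemma centralMoment_four_betaMeasure_le (hs : 0 < s) (ht : 0 < t) :
    centralMoment id 4 (betaMeasure s t) ≤ 1 / (4 * (s + t) ^ 2) := by
  rw [centralMoment_four_betaMeasure hs ht]
  have hn : 0 < s + t := add_pos hs ht
  have hp : 0 < s * t := mul_pos hs ht
  have amgm : s * t ≤ (s + t) ^ 2 / 4 := by linarith [four_mul_le_sq_add s t]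
  generalize s + t = n at *
  generalize s * t = p at *
  have factor_le : 2 * n ^ 2 + p * (n - 6) ≤ n ^ 2 / 4 * (n + 8) := by
    linarith [mul_le_mul_of_nonneg_right amgm hn.le]
  calc 3 * p * (2 * n ^ 2 + p * (n - 6)) / (n ^ 4 * (n + 1) * (n + 2) * (n + 3))
      ≤ 3 * p * (n ^ 2 / 4 * (n + 8)) / (n ^ 4 * (n + 1) * (n + 2) * (n + 3)) := by gcongr
    _ ≤ 3 * (n ^ 2 / 4) * (n ^ 2 / 4 * (n + 8)) / (n ^ 4 * (n + 1) * (n + 2) * (n + 3)) := by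
        gcongr
    _ = 3 * (n + 8) / (16 * ((n + 1) * (n + 2) * (n + 3))) := by
        field_simp
        norm_num
    _ ≤ 1 / (4 * n ^ 2) := by
        rw [div_le_div_iff₀ (by positivity) (by positivity)]
        linarith [pow_pos hn 3]

end BetaMeasure

lemma betaDist_eq_withDensity (s t : ℝ) :
    betaDist s t = volume.withDensity
      fun y ↦ ENNReal.ofReal (1 / 2) * betaPDF s t ((1 - y) / 2) := by
  unfold betaDist
  congr with y
  have mem_iff : y ∈ Set.Ioo (-1 : ℝ) 1 ↔ 0 < (1 - y) / 2 ∧ (1 - y) / 2 < 1 := by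
    constructor <;> rintro ⟨h₁, h₂⟩ <;> constructor <;> linarith
  rw [betaPDF, ← ENNReal.ofReal_mul one_half_pos.le]
  simp only [betaPDFReal, beta, one_div_div, mem_iff]
  split_ifs with hy
  · have two_rpow : (2 : ℝ) ^ (1 - s - t) = 1 / 2 / (2 ^ (s - 1) * 2 ^ (t - 1)) := by
      rw [show 1 - s - t = -1 - ((s - 1) + (t - 1)) by ring, Real.rpow_sub two_pos,
        Real.rpow_add two_pos, Real.rpow_neg_one, one_div]
    rw [two_rpow, show 1 - (1 - y) / 2 = (1 + y) / 2 by ring,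
      Real.div_rpow (by linarith) zero_le_two, Real.div_rpow (by linarith) zero_le_two]
    congr 1
    ring
  · rw [mul_zero]

lemma betaDist_eq_map_betaMeasure (s t : ℝ) :
    betaDist s t = (betaMeasure s t).map (fun x ↦ 1 + -2 * x) := by
  have hasDerivAt_inv (y : ℝ) : HasDerivAt (fun y : ℝ ↦ (1 - y) / 2) (-(1 / 2)) y := by
    simpa only [neg_div] using ((hasDerivAt_id' y).const_sub 1).div_const 2
  have inv_injective : Function.Injective fun y : ℝ ↦ (1 - y) / 2 :=
    fun x y hxy ↦ by linarith only [hxy]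
  ext A hA
  have preimage_eq : (fun x : ℝ ↦ 1 + -2 * x) ⁻¹' A = (fun y ↦ (1 - y) / 2) '' A :=
    (congrFun (Set.image_eq_preimage_of_inverse (fun y ↦ by ring) (fun x ↦ by ring)) A).symm
  calc betaDist s t A = ∫⁻ y in A, ENNReal.ofReal |-(1 / 2)| * betaPDF s t ((1 - y) / 2) := by
        rw [betaDist_eq_withDensity, withDensity_apply _ hA, abs_neg, abs_of_pos one_half_pos]
    _ = ∫⁻ x in (fun y ↦ (1 - y) / 2) '' A, betaPDF s t x :=
        (lintegral_image_eq_lintegral_abs_deriv_mul hA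
          (fun y _ ↦ (hasDerivAt_inv y).hasDerivWithinAt) inv_injective.injOn _).symm
    _ = (betaMeasure s t).map (fun x ↦ 1 + -2 * x) A := by
        rw [Measure.map_apply (by fun_prop) hA, preimage_eq, betaMeasure, withDensity_apply']

section Jacobi

variable {Ω : Type*} [MeasurableSpace Ω] {μ : Measure Ω} {X : Ω → ℝ}

lemma centralMoment_four_le_of_hasLaw_betaDist {s t : ℝ} (hs : 0 < s) (ht : 0 < t)
    (hX : HasLaw X (betaDist s t) μ) : centralMoment X 4 μ ≤ 4 / (s + t) ^ 2 := by
  have := isProbabilityMeasureBeta hs ht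
  have integrable_id : Integrable id (betaMeasure s t) := by
    simpa only [pow_one] using integrable_pow_betaMeasure hs ht 1
  calc centralMoment X 4 μ = centralMoment (fun x ↦ 1 + -2 * x) 4 (betaMeasure s t) := by
        rw [← centralMoment_id_map hX.aemeasurable, hX.map_eq, betaDist_eq_map_betaMeasure,
          centralMoment_id_map (by fun_prop)]
    _ = (-2) ^ 4 * centralMoment id 4 (betaMeasure s t) :=
        centralMoment_const_add_const_mul integrable_id 1 (-2) 4
    _ ≤ (-2) ^ 4 * (1 / (4 * (s + t) ^ 2)) := by
        gcongr
        exact centralMoment_four_betaMeasure_le hs ht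
    _ = 4 / (s + t) ^ 2 := by
        field_simp
        norm_num

variable {β a b : ℝ}

lemma exists_jacobiAlphaDist_eq_betaDist (hβ : 0 < β) (ha : 0 < a) (hb : 0 < b) (k : ℕ) :
    ∃ s t : ℝ, 0 < s ∧ 0 < t ∧ s + t = k * β / 2 + a + b ∧
      jacobiAlphaDist β a b k = betaDist s t := by
  unfold jacobiAlphaDist
  split_ifs with hk
  · exact ⟨_, _, by positivity, by positivity, by ring, rfl⟩
  · have one_le : (1 : ℝ) ≤ k := by exact_mod_cast (Nat.not_even_iff_odd.mp hk).pos
    have : 0 ≤ (k : ℝ) - 1 := sub_nonneg.mpr one_le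
    exact ⟨_, _, by positivity, by positivity, by ring, rfl⟩

lemma centralMoment_four_le_of_hasLaw_jacobiAlphaDist (hβ : 0 < β) (ha : 0 < a) (hb : 0 < b)
    {k : ℕ} (hX : HasLaw X (jacobiAlphaDist β a b k) μ) :
    centralMoment X 4 μ ≤ 4 / (min (β / 2) (a + b)) ^ 2 / ((k : ℝ) + 1) ^ 2 := by
  obtain ⟨s, t, hs, ht, hst, hlaw⟩ := exists_jacobiAlphaDist_eq_betaDist hβ ha hb k
  rw [hlaw] at hX
  have min_mul_le : min (β / 2) (a + b) * (k + 1) ≤ s + t :=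
    calc min (β / 2) (a + b) * (k + 1)
        = min (β / 2) (a + b) * k + min (β / 2) (a + b) := mul_add_one _ _
      _ ≤ β / 2 * k + (a + b) := by
          gcongr
          · exact min_le_left _ _
          · exact min_le_right _ _
      _ = s + t := by rw [hst]; ring
  calc centralMoment X 4 μ ≤ 4 / (s + t) ^ 2 := centralMoment_four_le_of_hasLaw_betaDist hs ht hX
    _ ≤ 4 / (min (β / 2) (a + b) * (k + 1)) ^ 2 := by gcongr
    _ = 4 / (min (β / 2) (a + b)) ^ 2 / ((k : ℝ) + 1) ^ 2 := by rw [mul_pow, div_div]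

end Jacobi

/-- there is `C = C(β,a,b)` such that if `α_k` has the Jacobi-`β`-ensemble
Verblunsky law, then `E{Υ̃(ψ,α_k)⁴} ≤ C (k+1)^{−2}`, where `Υ̃(ψ,α) = 2[α − E(α)] sin ψ`. -/
theorem beta_UpsT_fourth_moment_le {Ω : Type*} [MeasurableSpace Ω] (μ : Measure Ω)
    [IsProbabilityMeasure μ] (β a b : ℝ) (hβ : 0 < β) (ha : 0 < a) (hb : 0 < b)
    (α : ℕ → Ω → ℝ) (hα : ∀ k, Measurable (α k))
    (hlaw : ∀ k, Measure.map (α k) μ = jacobiAlphaDist β a b k) :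
    ∃ C : ℝ, ∀ (k : ℕ) (ψ : ℝ),
      ∫ ω, (2 * (α k ω - ∫ ω', α k ω' ∂μ) * Real.sin ψ) ^ 4 ∂μ ≤ C / ((k : ℝ) + 1) ^ 2 := by
  refine ⟨(2 : ℝ) ^ 4 * (4 / (min (β / 2) (a + b)) ^ 2), fun k ψ ↦ ?_⟩
  have moment_le := centralMoment_four_le_of_hasLaw_jacobiAlphaDist hβ ha hb
    ⟨(hα k).aemeasurable, hlaw k⟩
  have sin_pow_le : Real.sin ψ ^ 4 ≤ 1 := by
    simpa only [← pow_mul] using pow_le_one₀ (n := 2) (sq_nonneg _) (Real.sin_sq_le_one ψ)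
  calc ∫ ω, (2 * (α k ω - ∫ ω', α k ω' ∂μ) * Real.sin ψ) ^ 4 ∂μ
      = 2 ^ 4 * centralMoment (α k) 4 μ * Real.sin ψ ^ 4 := by
        simp only [mul_pow, integral_const_mul, integral_mul_const, centralMoment, Pi.pow_apply,
          Pi.sub_apply]
    _ ≤ 2 ^ 4 * (4 / (min (β / 2) (a + b)) ^ 2 / ((k : ℝ) + 1) ^ 2) * 1 := by gcongr
    _ = 2 ^ 4 * (4 / (min (β / 2) (a + b)) ^ 2) / ((k : ℝ) + 1) ^ 2 := by
        rw [mul_one, mul_div_assoc]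
end

section
/- For every ε > 0 and δ > 0 there is a constant C = C(ε, δ) such that: whenever s, t ∈ (ε, ∞) satisfy |s − t| ≤ δ and X is a B(s,t)-distributed real random variable, E{−X² log(1 − X²)} ≤ C (s + t)^{−2}. -/
open MeasureTheory ProbabilityTheory Filter
open scoped Real NNReal

/-!
For `0 < η ≤ 1` and `0 ≤ u < 1` one has `-log (1 - u) ≤ η⁻¹ u (1 - u) ^ (-η)`, so that
`E{-X² log (1 - X²)} ≤ η⁻¹ E{X⁴ (1 - X²) ^ (-η)}`. The weight `(1 - X) ^ (-η) (1 + X) ^ (-η)` turns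
`B(s, t)` into `B(s - η, t - η)`, at the price of a ratio of beta functions. For
`η = min (ε / 2) 1`, log-convexity of the Gamma function bounds that ratio, and the fourth moment of
`B(s - η, t - η)` is of order `(s + t)⁻²`.
-/

section Inequalities

lemma neg_log_le_one_sub_mul_rpow_neg {y a : ℝ} (hy₀ : 0 < y) (hy₁ : y ≤ 1) (ha₀ : 0 < a)
    (ha₁ : a ≤ 1) : -Real.log y ≤ a⁻¹ * ((1 - y) * y ^ (-a)) := by
  have hlog : -(a * Real.log y) ≤ y ^ (-a) - 1 := by
    have := Real.log_le_sub_one_of_pos (Real.rpow_pos_of_pos hy₀ (-a))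
    rwa [Real.log_rpow hy₀, neg_mul] at this
  have hpow : y * y ^ (-a) ≤ 1 := by
    have := Real.rpow_le_one hy₀.le hy₁ (sub_nonneg.2 ha₁)
    rwa [sub_eq_add_neg, Real.rpow_add hy₀, Real.rpow_one] at this
  rw [inv_mul_eq_div, le_div_iff₀ ha₀]
  linarith

lemma neg_sq_mul_log_le {x a : ℝ} (hx : x ∈ Set.Ioo (-1 : ℝ) 1) (ha₀ : 0 < a) (ha₁ : a ≤ 1) :
    -(x ^ 2 * Real.log (1 - x ^ 2)) ≤ (1 - x) ^ (-a) * (1 + x) ^ (-a) * (a⁻¹ * x ^ 4) := by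
  have hx₂ : 0 < 1 - x ^ 2 := by nlinarith [hx.1, hx.2]
  have hfactor : (1 - x ^ 2) ^ (-a) = (1 - x) ^ (-a) * (1 + x) ^ (-a) := by
    rw [← Real.mul_rpow (by linarith [hx.2]) (by linarith [hx.1])]
    ring_nf
  calc -(x ^ 2 * Real.log (1 - x ^ 2)) = x ^ 2 * -Real.log (1 - x ^ 2) := by ring
    _ ≤ x ^ 2 * (a⁻¹ * ((1 - (1 - x ^ 2)) * (1 - x ^ 2) ^ (-a))) := by
      gcongr
      exact neg_log_le_one_sub_mul_rpow_neg hx₂ (by nlinarith) ha₀ ha₁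
    _ = (1 - x) ^ (-a) * (1 + x) ^ (-a) * (a⁻¹ * x ^ 4) := by rw [hfactor]; ring

lemma neg_sq_mul_log_nonneg {x : ℝ} (hx : x ∈ Set.Ioo (-1 : ℝ) 1) :
    0 ≤ -(x ^ 2 * Real.log (1 - x ^ 2)) := by
  have hlog : Real.log (1 - x ^ 2) ≤ 0 :=
    Real.log_nonpos (by nlinarith [hx.1, hx.2]) (by nlinarith)
  nlinarith [sq_nonneg x]

lemma Gamma_add_le_rpow_mul_Gamma {x a : ℝ} (hx : 0 < x) (ha₀ : 0 ≤ a) (ha₁ : a ≤ 1) :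
    Real.Gamma (x + a) ≤ x ^ a * Real.Gamma x := by
  obtain rfl | ha₀ := ha₀.eq_or_lt
  · simp
  obtain rfl | ha₁ := ha₁.eq_or_lt
  · simp [Real.Gamma_add_one hx.ne']
  have hΓ := Real.Gamma_pos_of_pos hx
  calc Real.Gamma (x + a) = Real.Gamma ((1 - a) * x + a * (x + 1)) := by ring_nf
    _ ≤ Real.Gamma x ^ (1 - a) * Real.Gamma (x + 1) ^ a :=
      Real.Gamma_mul_add_mul_le_rpow_Gamma_mul_rpow_Gamma hx (by linarith) (by linarith) ha₀
        (by ring)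
    _ = x ^ a * (Real.Gamma x ^ (1 - a) * Real.Gamma x ^ a) := by
      rw [Real.Gamma_add_one hx.ne', Real.mul_rpow hx.le hΓ.le]
      ring
    _ = x ^ a * Real.Gamma x := by rw [← Real.rpow_add hΓ, sub_add_cancel, Real.rpow_one]

lemma mul_Gamma_le_rpow_mul_Gamma_add {x a : ℝ} (hx : 0 < x) (ha₀ : 0 ≤ a) (ha₁ : a ≤ 1) :
    x * Real.Gamma x ≤ (x + a) ^ (1 - a) * Real.Gamma (x + a) := by
  have h := Gamma_add_le_rpow_mul_Gamma (add_pos_of_pos_of_nonneg hx ha₀) (sub_nonneg.2 ha₁)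
    (sub_le_self 1 ha₀)
  rwa [add_add_sub_cancel, Real.Gamma_add_one hx.ne'] at h

lemma Gamma_add_two_mul_le_rpow_mul_Gamma {x a : ℝ} (hx : 0 < x) (ha₀ : 0 ≤ a) (ha₁ : a ≤ 1) :
    Real.Gamma (x + 2 * a) ≤ (x + a) ^ (2 * a) * Real.Gamma x := by
  have hxa : 0 < x + a := by positivity
  calc Real.Gamma (x + 2 * a) = Real.Gamma (x + a + a) := by ring_nf
    _ ≤ (x + a) ^ a * (x ^ a * Real.Gamma x) := by
      grw [Gamma_add_le_rpow_mul_Gamma hxa ha₀ ha₁, Gamma_add_le_rpow_mul_Gamma hx ha₀ ha₁]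
    _ ≤ (x + a) ^ a * ((x + a) ^ a * Real.Gamma x) := by
      gcongr
      linarith
    _ = (x + a) ^ (2 * a) * Real.Gamma x := by rw [two_mul, Real.rpow_add hxa]; ring

lemma beta_le_mul_beta_add_add {s t a : ℝ} (hs : 0 < s) (ht : 0 < t) (ha₀ : 0 ≤ a) (ha₁ : a ≤ 1) :
    beta s t ≤ (s + t + 2 * a) ^ 2 / (s * t) * beta (s + a) (t + a) := by
  set n := s + t + 2 * a
  have hn₀ : 0 < n := by positivity
  have h₁ : 0 ≤ 1 - a := by linarith
  have hΓs : s * Real.Gamma s ≤ n ^ (1 - a) * Real.Gamma (s + a) := by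
    grw [mul_Gamma_le_rpow_mul_Gamma_add hs ha₀ ha₁, show s + a ≤ n by linarith]
  have hΓt : t * Real.Gamma t ≤ n ^ (1 - a) * Real.Gamma (t + a) := by
    grw [mul_Gamma_le_rpow_mul_Gamma_add ht ha₀ ha₁, show t + a ≤ n by linarith]
  have hΓn : Real.Gamma n ≤ n ^ (2 * a) * Real.Gamma (s + t) := by
    grw [Gamma_add_two_mul_le_rpow_mul_Gamma (add_pos hs ht) ha₀ ha₁,
      show s + t + a ≤ n by linarith]
  have hpow : n ^ (1 - a) * n ^ (1 - a) * n ^ (2 * a) = n ^ 2 := by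
    rw [← Real.rpow_add hn₀, ← Real.rpow_add hn₀, ← Real.rpow_natCast]
    ring_nf
  have hsum : s + a + (t + a) = n := by ring
  unfold beta
  rw [hsum, div_mul_div_comm, div_le_div_iff₀ (by positivity) (by positivity)]
  calc Real.Gamma s * Real.Gamma t * (s * t * Real.Gamma n)
      = s * Real.Gamma s * (t * Real.Gamma t) * Real.Gamma n := by ring
    _ ≤ n ^ (1 - a) * Real.Gamma (s + a) * (n ^ (1 - a) * Real.Gamma (t + a)) *
        (n ^ (2 * a) * Real.Gamma (s + t)) := by gcongr
    _ = n ^ 2 * (Real.Gamma (s + a) * Real.Gamma (t + a)) * Real.Gamma (s + t) := by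
      rw [← hpow]; ring

end Inequalities

section Density

/-- The Lebesgue density of `betaDist s t`, real-valued and equal to `0` outside `(-1, 1)`. -/
noncomputable def betaDensity (s t x : ℝ) : ℝ :=
  if x ∈ Set.Ioo (-1 : ℝ) 1 then
    2 ^ (1 - s - t) * Real.Gamma (s + t) / (Real.Gamma s * Real.Gamma t) *
      (1 - x) ^ (s - 1) * (1 + x) ^ (t - 1) else 0

lemma betaDist_eq_withDensity_s19 (s t : ℝ) :
    betaDist s t = volume.withDensity fun x => ENNReal.ofReal (betaDensity s t x) := rfl

@[fun_prop]
lemma measurable_betaDensity (s t : ℝ) : Measurable (betaDensity s t) :=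
  Measurable.ite measurableSet_Ioo (by fun_prop) (by fun_prop)

lemma betaDensity_of_mem {x : ℝ} (s t : ℝ) (hx : x ∈ Set.Ioo (-1 : ℝ) 1) :
    betaDensity s t x = 2 ^ (1 - s - t) / beta s t * (1 - x) ^ (s - 1) * (1 + x) ^ (t - 1) := by
  rw [betaDensity, if_pos hx, beta, div_div_eq_mul_div]

lemma betaDensity_of_notMem {x : ℝ} (s t : ℝ) (hx : x ∉ Set.Ioo (-1 : ℝ) 1) :
    betaDensity s t x = 0 :=
  if_neg hx

lemma betaDensity_nonneg {s t : ℝ} (hs : 0 < s) (ht : 0 < t) (x : ℝ) : 0 ≤ betaDensity s t x := by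
  by_cases hx : x ∈ Set.Ioo (-1 : ℝ) 1
  · have hleft : 0 < 1 - x := by linarith [hx.2]
    have hright : 0 < 1 + x := by linarith [hx.1]
    have := beta_pos hs ht
    rw [betaDensity_of_mem s t hx]
    positivity
  · exact (betaDensity_of_notMem s t hx).ge

lemma betaDensity_eq_betaPDFReal (s t x : ℝ) :
    betaDensity s t x = betaPDFReal t s ((x + 1) / 2) / 2 := by
  have hmem : (0 < (x + 1) / 2 ∧ (x + 1) / 2 < 1) ↔ x ∈ Set.Ioo (-1 : ℝ) 1 := by
    constructor <;> rintro ⟨h₀, h₁⟩ <;> constructor <;> linarith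
  by_cases hx : x ∈ Set.Ioo (-1 : ℝ) 1
  · have hsub : 1 - (x + 1) / 2 = (1 - x) / 2 := by ring
    have hpow : (2 : ℝ) ^ (1 - s - t) = (2 ^ (s - 1) * 2 ^ (t - 1) * 2)⁻¹ := by
      rw [← Real.rpow_add two_pos, ← Real.rpow_add_one two_ne_zero, ← Real.rpow_neg two_pos.le]
      ring_nf
    rw [betaDensity_of_mem s t hx, betaPDFReal, if_pos (hmem.2 hx), hsub,
      Real.div_rpow (by linarith [hx.1]) two_pos.le, Real.div_rpow (by linarith [hx.2]) two_pos.le,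
      hpow, beta, beta, add_comm t s, add_comm x 1]
    ring
  · rw [betaDensity_of_notMem s t hx, betaPDFReal, if_neg (hmem.not.2 hx), zero_div]

lemma integral_betaPDFReal {s t : ℝ} (hs : 0 < s) (ht : 0 < t) : ∫ x, betaPDFReal s t x = 1 := by
  have hnonneg : ∀ x, 0 ≤ betaPDFReal s t x := fun x => by
    by_cases hx : 0 < x ∧ x < 1
    · exact (betaPDFReal_pos hx.1 hx.2 hs ht).le
    · exact (if_neg hx).ge
  rw [integral_eq_lintegral_of_nonneg_ae (.of_forall hnonneg) (by fun_prop)]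
  exact congrArg ENNReal.toReal (lintegral_betaPDF_eq_one hs ht)

lemma integral_betaDensity {s t : ℝ} (hs : 0 < s) (ht : 0 < t) : ∫ x, betaDensity s t x = 1 := by
  simp_rw [betaDensity_eq_betaPDFReal]
  rw [integral_div, integral_add_right_eq_self fun x => betaPDFReal t s (x / 2),
    Measure.integral_comp_div, integral_betaPDFReal ht hs]
  norm_num

lemma betaDensity_mul_rpow_mul_rpow {s t a b : ℝ} (hsa : 0 < s + a) (htb : 0 < t + b) (x : ℝ) :
    betaDensity s t x * ((1 - x) ^ a * (1 + x) ^ b) =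
      2 ^ (a + b) * (beta (s + a) (t + b) / beta s t) * betaDensity (s + a) (t + b) x := by
  by_cases hx : x ∈ Set.Ioo (-1 : ℝ) 1
  · have hpow : (2 : ℝ) ^ (1 - s - t) = 2 ^ (a + b) * 2 ^ (1 - (s + a) - (t + b)) := by
      rw [← Real.rpow_add two_pos]
      ring_nf
    have hleft : (1 - x) ^ (s + a - 1) = (1 - x) ^ (s - 1) * (1 - x) ^ a := by
      rw [← Real.rpow_add (by linarith [hx.2])]
      ring_nf
    have hright : (1 + x) ^ (t + b - 1) = (1 + x) ^ (t - 1) * (1 + x) ^ b := by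
      rw [← Real.rpow_add (by linarith [hx.1])]
      ring_nf
    have := (beta_pos hsa htb).ne'
    rw [betaDensity_of_mem _ _ hx, betaDensity_of_mem _ _ hx, hpow, hleft, hright]
    field_simp
  · simp [betaDensity_of_notMem _ _ hx]

end Density

section BetaDist

variable {s t : ℝ}

lemma isProbabilityMeasure_betaDist (hs : 0 < s) (ht : 0 < t) :
    IsProbabilityMeasure (betaDist s t) where
  measure_univ := by
    rw [betaDist_eq_withDensity_s19, withDensity_apply _ .univ, Measure.restrict_univ,
      ← ofReal_integral_eq_lintegral_ofReal
        (integrable_of_integral_eq_one (integral_betaDensity hs ht))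
        (.of_forall (betaDensity_nonneg hs ht)),
      integral_betaDensity hs ht, ENNReal.ofReal_one]

lemma ae_mem_Ioo_betaDist (s t : ℝ) : ∀ᵐ x ∂betaDist s t, x ∈ Set.Ioo (-1 : ℝ) 1 := by
  rw [betaDist_eq_withDensity_s19, ae_withDensity_iff (by fun_prop)]
  refine .of_forall fun x => not_imp_comm.1 fun hx => ?_
  rw [betaDensity_of_notMem s t hx, ENNReal.ofReal_zero]

lemma integral_betaDist (hs : 0 < s) (ht : 0 < t) (f : ℝ → ℝ) :
    ∫ x, f x ∂betaDist s t = ∫ x, betaDensity s t x * f x := by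
  rw [betaDist_eq_withDensity_s19, integral_withDensity_eq_integral_toReal_smul (by fun_prop) (by simp)]
  simp_rw [ENNReal.toReal_ofReal (betaDensity_nonneg hs ht _), smul_eq_mul]

lemma integrable_betaDist_iff (hs : 0 < s) (ht : 0 < t) {f : ℝ → ℝ} :
    Integrable f (betaDist s t) ↔ Integrable fun x => betaDensity s t x * f x := by
  rw [betaDist_eq_withDensity_s19, integrable_withDensity_iff_integrable_smul' (by fun_prop) (by simp)]
  simp_rw [ENNReal.toReal_ofReal (betaDensity_nonneg hs ht _), smul_eq_mul]

lemma integral_rpow_mul_rpow_mul_betaDist {a b : ℝ} (hs : 0 < s) (ht : 0 < t) (hsa : 0 < s + a)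
    (htb : 0 < t + b) (f : ℝ → ℝ) :
    ∫ x, (1 - x) ^ a * (1 + x) ^ b * f x ∂betaDist s t =
      2 ^ (a + b) * (beta (s + a) (t + b) / beta s t) * ∫ x, f x ∂betaDist (s + a) (t + b) := by
  rw [integral_betaDist hs ht, integral_betaDist hsa htb, ← integral_const_mul]
  simp_rw [← mul_assoc _ (_ * _) (f _), betaDensity_mul_rpow_mul_rpow hsa htb, mul_assoc]

lemma integrable_rpow_mul_rpow_mul_betaDist {a b : ℝ} (hs : 0 < s) (ht : 0 < t)
    (hsa : 0 < s + a) (htb : 0 < t + b) {f : ℝ → ℝ} (hf : Integrable f (betaDist (s + a) (t + b))) :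
    Integrable (fun x => (1 - x) ^ a * (1 + x) ^ b * f x) (betaDist s t) := by
  rw [integrable_betaDist_iff hsa htb] at hf
  rw [integrable_betaDist_iff hs ht]
  simp_rw [← mul_assoc _ (_ * _) (f _), betaDensity_mul_rpow_mul_rpow hsa htb, mul_assoc _ _ (f _)]
  exact hf.const_mul _

lemma integrable_betaDist_of_continuous (hs : 0 < s) (ht : 0 < t) {f : ℝ → ℝ} (hf : Continuous f) :
    Integrable f (betaDist s t) := by
  have := isProbabilityMeasure_betaDist hs ht
  obtain ⟨C, hC⟩ := (isCompact_Icc (a := (-1 : ℝ)) (b := 1)).exists_bound_of_continuousOn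
    hf.continuousOn
  refine .of_bound hf.aestronglyMeasurable C ?_
  filter_upwards [ae_mem_Ioo_betaDist s t] with x hx using hC x (Set.Ioo_subset_Icc_self hx)

end BetaDist

section Moments

variable {s t : ℝ}

lemma beta_comm (s t : ℝ) : beta s t = beta t s := by
  rw [beta, beta, mul_comm, add_comm]

lemma integral_one_sub_mul_betaDist (hs : 0 < s) (ht : 0 < t) (f : ℝ → ℝ) :
    ∫ x, (1 - x) * f x ∂betaDist s t = 2 * s / (s + t) * ∫ x, f x ∂betaDist (s + 1) t := by
  have h := integral_rpow_mul_rpow_mul_betaDist (a := 1) (b := 0) hs ht (by linarith)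
    (by linarith) f
  simp only [Real.rpow_one, Real.rpow_zero, mul_one, add_zero] at h
  rw [h, beta_add_one_left hs.ne' (add_pos hs ht).ne',
    mul_div_cancel_right₀ _ (beta_pos hs ht).ne', mul_div_assoc]

lemma integral_one_add_mul_betaDist (hs : 0 < s) (ht : 0 < t) (f : ℝ → ℝ) :
    ∫ x, (1 + x) * f x ∂betaDist s t = 2 * t / (s + t) * ∫ x, f x ∂betaDist s (t + 1) := by
  have h := integral_rpow_mul_rpow_mul_betaDist (a := 0) (b := 1) hs ht (by linarith)
    (by linarith) f
  simp only [Real.rpow_one, Real.rpow_zero, one_mul, zero_add, add_zero] at h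
  rw [h, beta_comm s, beta_comm s, beta_add_one_left ht.ne' (add_pos ht hs).ne',
    mul_div_cancel_right₀ _ (beta_pos ht hs).ne', mul_div_assoc, add_comm t s]

lemma integral_id_mul_betaDist (hs : 0 < s) (ht : 0 < t) {f : ℝ → ℝ} (hf : Continuous f) :
    ∫ x, x * f x ∂betaDist s t =
      (t * ∫ x, f x ∂betaDist s (t + 1) - s * ∫ x, f x ∂betaDist (s + 1) t) / (s + t) := by
  calc ∫ x, x * f x ∂betaDist s t
      = ∫ x, ((1 + x) * f x - (1 - x) * f x) / 2 ∂betaDist s t := by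
        congr with x
        ring
    _ = (∫ x, (1 + x) * f x ∂betaDist s t - ∫ x, (1 - x) * f x ∂betaDist s t) / 2 := by
        rw [integral_div, integral_sub] <;>
          exact integrable_betaDist_of_continuous hs ht (by fun_prop)
    _ = _ := by
        rw [integral_one_add_mul_betaDist hs ht, integral_one_sub_mul_betaDist hs ht]
        ring

lemma integral_pow_succ_betaDist (hs : 0 < s) (ht : 0 < t) (k : ℕ) :
    ∫ x, x ^ (k + 1) ∂betaDist s t =
      (t * ∫ x, x ^ k ∂betaDist s (t + 1) - s * ∫ x, x ^ k ∂betaDist (s + 1) t) / (s + t) := by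
  simp_rw [pow_succ']
  exact integral_id_mul_betaDist hs ht (continuous_pow k)

lemma integral_id_betaDist (hs : 0 < s) (ht : 0 < t) :
    ∫ x, x ∂betaDist s t = (t - s) / (s + t) := by
  have := isProbabilityMeasure_betaDist hs (add_pos ht one_pos)
  have := isProbabilityMeasure_betaDist (add_pos hs one_pos) ht
  simpa using integral_pow_succ_betaDist hs ht 0

lemma integral_sq_betaDist (hs : 0 < s) (ht : 0 < t) :
    ∫ x, x ^ 2 ∂betaDist s t = ((t - s) ^ 2 + (s + t)) / ((s + t) * (s + t + 1)) := by
  rw [integral_pow_succ_betaDist hs ht]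
  simp only [pow_one]
  rw [integral_id_betaDist hs (by positivity), integral_id_betaDist (by positivity) ht,
    add_right_comm s 1 t, ← add_assoc s t 1]
  field_simp
  ring

lemma integral_pow_three_betaDist (hs : 0 < s) (ht : 0 < t) :
    ∫ x, x ^ 3 ∂betaDist s t =
      (t - s) * ((t - s) ^ 2 + 3 * (s + t) + 2) / ((s + t) * (s + t + 1) * (s + t + 2)) := by
  rw [integral_pow_succ_betaDist hs ht, integral_sq_betaDist hs (by positivity),
    integral_sq_betaDist (by positivity) ht, add_right_comm s 1 t, ← add_assoc s t 1,
    add_assoc (s + t) 1 1, one_add_one_eq_two]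
  field_simp
  ring

lemma integral_pow_four_betaDist (hs : 0 < s) (ht : 0 < t) :
    ∫ x, x ^ 4 ∂betaDist s t =
      ((t - s) ^ 4 + (6 * (s + t) + 8) * (t - s) ^ 2 + 3 * (s + t) ^ 2 + 6 * (s + t)) /
        ((s + t) * (s + t + 1) * (s + t + 2) * (s + t + 3)) := by
  rw [integral_pow_succ_betaDist hs ht, integral_pow_three_betaDist hs (by positivity),
    integral_pow_three_betaDist (by positivity) ht, add_right_comm s 1 t, ← add_assoc s t 1,
    add_assoc (s + t) 1 1, one_add_one_eq_two, add_assoc (s + t) 1 2,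
    show (1 : ℝ) + 2 = 3 by norm_num]
  field_simp
  ring

lemma integral_pow_four_betaDist_le (hs : 0 < s) (ht : 0 < t) :
    ∫ x, x ^ 4 ∂betaDist s t ≤ (((s - t) ^ 2 + 4) / (s + t)) ^ 2 := by
  rw [integral_pow_four_betaDist hs ht]
  set n := s + t
  have hn : 0 < n := add_pos hs ht
  set d := (s - t) ^ 2
  have hd₀ : 0 ≤ d := sq_nonneg _
  calc ((t - s) ^ 4 + (6 * n + 8) * (t - s) ^ 2 + 3 * n ^ 2 + 6 * n) /
        (n * (n + 1) * (n + 2) * (n + 3))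
      ≤ (d + 3 * n + 4) ^ 2 / (n * (n + 1) * n * (n + 1)) := by
        gcongr ?_ / (n * (n + 1) * ?_ * ?_)
        · rw [show (t - s) ^ 4 = d ^ 2 by ring, show (t - s) ^ 2 = d by ring]
          nlinarith
        · linarith
        · linarith
    _ ≤ ((d + 4) * (n + 1)) ^ 2 / (n * (n + 1) * n * (n + 1)) := by
        gcongr
        nlinarith
    _ = ((d + 4) / n) ^ 2 := by
        field_simp

end Moments

section LogMoment

lemma integral_neg_sq_mul_log_betaDist_le_integral_pow_four {s t a : ℝ} (hs : 0 < s) (ht : 0 < t)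
    (ha₀ : 0 < a) (ha₁ : a ≤ 1) :
    ∫ x, -(x ^ 2 * Real.log (1 - x ^ 2)) ∂betaDist (s + a) (t + a) ≤
      a⁻¹ * (2 ^ (-a + -a) * (beta s t / beta (s + a) (t + a))) * ∫ x, x ^ 4 ∂betaDist s t := by
  have hsa : 0 < s + a := add_pos hs ha₀
  have hta : 0 < t + a := add_pos ht ha₀
  have hs' : s + a + -a = s := add_neg_cancel_right s a
  have ht' : t + a + -a = t := add_neg_cancel_right t a
  have hint : Integrable (fun x => (1 - x) ^ (-a) * (1 + x) ^ (-a) * (a⁻¹ * x ^ 4))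
      (betaDist (s + a) (t + a)) :=
    integrable_rpow_mul_rpow_mul_betaDist hsa hta (by rwa [hs']) (by rwa [ht'])
      (integrable_betaDist_of_continuous (by rwa [hs']) (by rwa [ht']) (by fun_prop))
  calc ∫ x, -(x ^ 2 * Real.log (1 - x ^ 2)) ∂betaDist (s + a) (t + a)
      ≤ ∫ x, (1 - x) ^ (-a) * (1 + x) ^ (-a) * (a⁻¹ * x ^ 4) ∂betaDist (s + a) (t + a) := by
        refine integral_mono_of_nonneg ?_ hint ?_ <;>
          filter_upwards [ae_mem_Ioo_betaDist (s + a) (t + a)] with x hx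
        · exact neg_sq_mul_log_nonneg hx
        · exact neg_sq_mul_log_le hx ha₀ ha₁
    _ = a⁻¹ * (2 ^ (-a + -a) * (beta s t / beta (s + a) (t + a))) * ∫ x, x ^ 4 ∂betaDist s t := by
        rw [integral_rpow_mul_rpow_mul_betaDist hsa hta (by rwa [hs']) (by rwa [ht']), hs', ht',
          integral_const_mul]
        ring

lemma integral_neg_sq_mul_log_betaDist_add_le {s t a : ℝ} (hs : 0 < s) (ht : 0 < t) (ha₀ : 0 < a)
    (ha₁ : a ≤ 1) :
    ∫ x, -(x ^ 2 * Real.log (1 - x ^ 2)) ∂betaDist (s + a) (t + a) ≤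
      a⁻¹ * ((s + t + 2 * a) ^ 2 / (s * t)) * (((s - t) ^ 2 + 4) / (s + t)) ^ 2 := by
  have hβ : 0 < beta (s + a) (t + a) := beta_pos (add_pos hs ha₀) (add_pos ht ha₀)
  have htwo : (2 : ℝ) ^ (-a + -a) ≤ 1 :=
    Real.rpow_le_one_of_one_le_of_nonpos one_le_two (by linarith)
  have hratio : beta s t / beta (s + a) (t + a) ≤ (s + t + 2 * a) ^ 2 / (s * t) :=
    (div_le_iff₀ hβ).2 (beta_le_mul_beta_add_add hs ht ha₀.le ha₁)
  calc ∫ x, -(x ^ 2 * Real.log (1 - x ^ 2)) ∂betaDist (s + a) (t + a)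
      ≤ a⁻¹ * (2 ^ (-a + -a) * (beta s t / beta (s + a) (t + a))) * ∫ x, x ^ 4 ∂betaDist s t :=
        integral_neg_sq_mul_log_betaDist_le_integral_pow_four hs ht ha₀ ha₁
    _ ≤ a⁻¹ * (1 * ((s + t + 2 * a) ^ 2 / (s * t))) * (((s - t) ^ 2 + 4) / (s + t)) ^ 2 := by
        have := beta_pos hs ht
        have : 0 ≤ ∫ x, x ^ 4 ∂betaDist s t := integral_nonneg fun x => by positivity
        grw [htwo, hratio, integral_pow_four_betaDist_le hs ht]
    _ = a⁻¹ * ((s + t + 2 * a) ^ 2 / (s * t)) * (((s - t) ^ 2 + 4) / (s + t)) ^ 2 := by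
        rw [one_mul]

lemma integral_neg_sq_mul_log_betaDist_le {s t a : ℝ} (ha₀ : 0 < a) (ha₁ : a ≤ 1)
    (has : 2 * a ≤ s) (hat : 2 * a ≤ t) :
    ∫ x, -(x ^ 2 * Real.log (1 - x ^ 2)) ∂betaDist s t ≤
      16 * a⁻¹ * ((s - t) ^ 2 + 4) ^ 2 / (s * t) := by
  have hs : 0 < s := by linarith
  have ht : 0 < t := by linarith
  have h := integral_neg_sq_mul_log_betaDist_add_le (s := s - a) (t := t - a) (by linarith)
    (by linarith) ha₀ ha₁
  rw [sub_add_cancel, sub_add_cancel, sub_sub_sub_cancel_right,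
    show s - a + (t - a) + 2 * a = s + t by ring] at h
  calc ∫ x, -(x ^ 2 * Real.log (1 - x ^ 2)) ∂betaDist s t
      ≤ a⁻¹ * ((s + t) ^ 2 / ((s - a) * (t - a))) *
          (((s - t) ^ 2 + 4) / (s - a + (t - a))) ^ 2 := h
    _ ≤ a⁻¹ * ((s + t) ^ 2 / (s / 2 * (t / 2))) * (((s - t) ^ 2 + 4) / ((s + t) / 2)) ^ 2 := by
        have : 0 ≤ ((s - t) ^ 2 + 4) / (s - a + (t - a)) := div_nonneg (by positivity) (by linarith)
        gcongr <;> linarith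
    _ = 16 * a⁻¹ * ((s - t) ^ 2 + 4) ^ 2 / (s * t) := by
        field_simp
        norm_num

end LogMoment

lemma add_le_mul_of_abs_sub_le {ε δ s t : ℝ} (hε : 0 < ε) (hs : ε ≤ s) (hst : |s - t| ≤ δ) :
    s + t ≤ (2 + δ / ε) * s := by
  have hδs : δ ≤ δ / ε * s := by
    rw [div_mul_eq_mul_div, le_div_iff₀ hε]
    exact mul_le_mul_of_nonneg_left hs ((abs_nonneg _).trans hst)
  linarith [(abs_le.1 hst).1]

lemma add_sq_le_mul_mul_of_abs_sub_le {ε δ s t : ℝ} (hε : 0 < ε) (hs : ε ≤ s) (ht : ε ≤ t)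
    (hst : |s - t| ≤ δ) : (s + t) ^ 2 ≤ (2 + δ / ε) ^ 2 * (s * t) := by
  have hadd_s : s + t ≤ (2 + δ / ε) * s := add_le_mul_of_abs_sub_le hε hs hst
  have hadd_t : s + t ≤ (2 + δ / ε) * t :=
    add_comm t s ▸ add_le_mul_of_abs_sub_le hε ht (abs_sub_comm s t ▸ hst)
  calc (s + t) ^ 2 = (s + t) * (s + t) := sq _
    _ ≤ (2 + δ / ε) * s * ((2 + δ / ε) * t) := by gcongr <;> linarith
    _ = (2 + δ / ε) ^ 2 * (s * t) := by ring

/-- for every `ε, δ > 0` there is `C = C(ε,δ)` such that whenever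
`s, t ∈ (ε, ∞)` with `|s − t| ≤ δ` and `X ~ B(s,t)`, one has
`E{−X² log(1 − X²)} ≤ C (s+t)^{−2}`. -/
theorem beta_neg_sq_log_moment_le (ε δ : ℝ) (hε : 0 < ε) (hδ : 0 < δ) :
    ∃ C : ℝ, ∀ s t : ℝ, ε < s → ε < t → |s - t| ≤ δ →
      ∫ x, -(x ^ 2 * Real.log (1 - x ^ 2)) ∂(betaDist s t) ≤ C / (s + t) ^ 2 := by
  set η := min (ε / 2) 1
  have hη₀ : 0 < η := by positivity
  have hηε : η ≤ ε / 2 := min_le_left _ _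
  refine ⟨16 * η⁻¹ * (δ ^ 2 + 4) ^ 2 * (2 + δ / ε) ^ 2, fun s t hs ht hst => ?_⟩
  have hs₀ : 0 < s := hε.trans hs
  have ht₀ : 0 < t := hε.trans ht
  have hsq : (s - t) ^ 2 ≤ δ ^ 2 := sq_le_sq.2 (hst.trans (le_abs_self δ))
  have hadd : (s + t) ^ 2 ≤ (2 + δ / ε) ^ 2 * (s * t) :=
    add_sq_le_mul_mul_of_abs_sub_le hε hs.le ht.le hst
  calc ∫ x, -(x ^ 2 * Real.log (1 - x ^ 2)) ∂(betaDist s t)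
      ≤ 16 * η⁻¹ * ((s - t) ^ 2 + 4) ^ 2 / (s * t) :=
        integral_neg_sq_mul_log_betaDist_le hη₀ (min_le_right _ _) (by linarith) (by linarith)
    _ ≤ 16 * η⁻¹ * (δ ^ 2 + 4) ^ 2 / (s * t) := by gcongr
    _ ≤ 16 * η⁻¹ * (δ ^ 2 + 4) ^ 2 * (2 + δ / ε) ^ 2 / (s + t) ^ 2 := by
        rw [div_le_div_iff₀ (by positivity) (by positivity), mul_assoc _ ((2 + δ / ε) ^ 2)]
        gcongr
end
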